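/- Let q be a prime power, and let g ∈ F_q[x] be a monic polynomial of degree k > 0 such that g divides x^{2k} + 1 and g divides x^{2k} - b·x^i - c with b, c ≠ 0 and 0 < i < 2k. Then i = k, c + 1 ≠ 0, and g(x) = x^k - a for some a ≠ 0 in F_q (specifically a = -(c+1)·b^{-1}). -/

import Mathlib

open Polynomial

/-!
Eliminating `X ^ (2 * k)` from the two dividends shows that `g` divides `b X ^ i + (c + 1)`.
Multiplying this binomial by `X ^ (2 * k - i)` and eliminating `X ^ (2 * k)` again shows that `g`
also divides `(c + 1) X ^ (2 * k - i) - b`. Both binomials are nonzero, so `k ≤ i` and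
`k ≤ 2 * k - i`; hence `i = k`, and the first binomial, having the degree of `g`, is `b g`.
-/

section Semiring

variable {R : Type*} [Semiring R] {g : R[X]} {a b : R} {m : ℕ}

theorem C_mul_X_pow_add_C_eq_zero_iff (hm : m ≠ 0) :
    C a * X ^ m + C b = 0 ↔ a = 0 ∧ b = 0 := by
  refine ⟨fun h ↦ ⟨?_, ?_⟩, fun ⟨ha, hb⟩ ↦ by simp [ha, hb]⟩
  · simpa [coeff_C, hm] using congr_arg (coeff · m) h
  · simpa [hm] using congr_arg (eval 0) h

theorem natDegree_C_mul_X_pow_add_C_le : (C a * X ^ m + C b).natDegree ≤ m := by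
  compute_degree

theorem natDegree_le_of_monic_of_dvd_C_mul_X_pow_add_C (hg : g.Monic) (hm : m ≠ 0)
    (hab : a ≠ 0 ∨ b ≠ 0) (h : g ∣ C a * X ^ m + C b) : g.natDegree ≤ m := by
  have hne : C a * X ^ m + C b ≠ 0 := by
    rwa [Ne, C_mul_X_pow_add_C_eq_zero_iff hm, not_and_or]
  by_contra! hlt
  exact hg.not_dvd_of_natDegree_lt hne (natDegree_C_mul_X_pow_add_C_le.trans_lt hlt) h

end Semiring

section CommRing

variable {R : Type*} [CommRing R] {g : R[X]} {a b d : R} {m n : ℕ}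

theorem C_mul_X_pow_add_C_eq_C_mul_of_monic_of_dvd (hg : g.Monic) (hm : g.natDegree ≠ 0)
    (h : g ∣ C a * X ^ g.natDegree + C b) : C a * X ^ g.natDegree + C b = C a * g := by
  obtain ⟨r, hr⟩ : ∃ r, C a * X ^ g.natDegree + C b = C r * g :=
    ⟨_, eq_leadingCoeff_mul_of_monic_of_dvd_of_natDegree_le hg h natDegree_C_mul_X_pow_add_C_le⟩
  have har : a = r := by
    simpa [coeff_C, hm, hg.coeff_natDegree] using congr_arg (coeff · g.natDegree) hr
  rw [hr, har]

theorem dvd_C_mul_X_pow_sub_add_C_of_dvd (hmn : m ≤ n) (hn : g ∣ X ^ n + C d)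
    (hm : g ∣ C a * X ^ m + C b) : g ∣ C b * X ^ (n - m) + C (-(a * d)) := by
  have hX : (X : R[X]) ^ m * X ^ (n - m) = X ^ n := pow_mul_pow_sub X hmn
  have hcomb : C b * X ^ (n - m) + C (-(a * d)) =
      (C a * X ^ m + C b) * X ^ (n - m) - C a * (X ^ n + C d) := by
    rw [C_neg, C_mul]
    linear_combination -C a * hX
  rw [hcomb]
  exact dvd_sub (hm.mul_right _) (hn.mul_left _)

theorem stmt_6_general {k i : ℕ} {b c : R} (hb : b ≠ 0) (hi : 0 < i) (hik : i < 2 * k)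
    (hmonic : g.Monic) (hdeg : g.natDegree = k) (h1 : g ∣ X ^ (2 * k) + 1)
    (h2 : g ∣ X ^ (2 * k) - C b * X ^ i - C c) :
    i = k ∧ c + 1 ≠ 0 ∧ C b * g = C b * X ^ k + C (c + 1) := by
  have hlow : g ∣ C b * X ^ i + C (c + 1) := by
    convert dvd_sub h1 h2 using 1
    rw [C_add, C_1]
    ring
  have hrefl : g ∣ C (c + 1) * X ^ (2 * k - i) + C (-b) := by
    simpa only [mul_one] using
      dvd_C_mul_X_pow_sub_add_C_of_dvd (d := 1) hik.le (by rwa [C_1]) hlow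
  have hki : g.natDegree ≤ i :=
    natDegree_le_of_monic_of_dvd_C_mul_X_pow_add_C hmonic hi.ne' (.inl hb) hlow
  have hki' : g.natDegree ≤ 2 * k - i :=
    natDegree_le_of_monic_of_dvd_C_mul_X_pow_add_C hmonic (by omega) (.inr (neg_ne_zero.mpr hb))
      hrefl
  obtain rfl : i = k := by omega
  refine ⟨rfl, fun hc ↦ ?_, ?_⟩
  · rw [hc, C_0, zero_mul, zero_add] at hrefl
    exact hmonic.not_dvd_of_natDegree_lt (C_ne_zero.mpr (neg_ne_zero.mpr hb))
      (by rwa [natDegree_C, hdeg]) hrefl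
  · subst hdeg
    exact (C_mul_X_pow_add_C_eq_C_mul_of_monic_of_dvd hmonic hi.ne' hlow).symm

end CommRing

theorem C_mul_eq_C_mul_X_pow_add_C_iff {K : Type*} [Field K] {g : K[X]} {a b : K} {m : ℕ}
    (ha : a ≠ 0) : C a * g = C a * X ^ m + C b ↔ g = X ^ m - C (-b * a⁻¹) := by
  have hfactor : C a * X ^ m + C b = C a * (X ^ m - C (-b * a⁻¹)) := by
    rw [mul_sub, ← C_mul, mul_comm a, inv_mul_cancel_right₀ ha, C_neg, sub_neg_eq_add]
  rw [hfactor, mul_right_inj' (C_ne_zero.mpr ha)]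

theorem stmt_6 {F : Type*} [Field F] [Fintype F] (k i : ℕ) (hk : 0 < k)
    (b c : F) (hb : b ≠ 0) (hc : c ≠ 0) (hi : 0 < i) (hik : i < 2 * k)
    (g : F[X]) (hmonic : g.Monic) (hdeg : g.natDegree = k)
    (h1 : g ∣ X ^ (2 * k) + 1)
    (h2 : g ∣ X ^ (2 * k) - C b * X ^ i - C c) :
    i = k ∧ c + 1 ≠ 0 ∧ g = X ^ k - C (-(c + 1) * b⁻¹) ∧ -(c + 1) * b⁻¹ ≠ 0 := by
  obtain ⟨hi_eq, hc1, hg⟩ := stmt_6_general hb hi hik hmonic hdeg h1 h2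
  exact ⟨hi_eq, hc1, (C_mul_eq_C_mul_X_pow_add_C_iff hb).mp hg,
    mul_ne_zero (neg_ne_zero.mpr hc1) (inv_ne_zero hb)⟩
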